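/- Let L > 0 be arbitrary. If λ ∈ ℂ and θ, u : [0,L] → ℂ are three times continuously differentiable and satisfy −u′(x) − u‴(x) = λ·θ(x) and −θ′(x) − θ‴(x) = λ·u(x) for all x ∈ [0,L], together with the boundary conditions θ(0) = θ(L) = θ′(0) = θ″(L) = 0 and u(0) = u(L) = u′(L) = u″(L) = 0, then θ and u vanish identically on [0,L]. -/

import Mathlib

open Set

lemma aux_exp (L : ℝ) (f f' : ℝ → ℂ) (r C : ℂ) (hf : ∀ x, HasDerivAt f (f' x) x)
    (h : ∀ x ∈ Icc (0 : ℝ) L, f' x = r * f x + C * Complex.exp (r * x)) :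
    ∀ x ∈ Icc (0 : ℝ) L, f x * Complex.exp (-(r * x)) - C * x = f 0 := by
  have hd : ∀ x : ℝ, HasDerivAt (fun x : ℝ => f x * Complex.exp (-(r * x)) - C * x)
      (f' x * Complex.exp (-(r * x)) + f x * (Complex.exp (-(r * x)) * (-(r * 1))) - C * 1) x := by
    intro x
    have h0 : HasDerivAt (fun x : ℝ => (x : ℂ)) 1 x := Complex.ofRealCLM.hasDerivAt
    exact ((hf x).mul ((h0.const_mul r).neg.cexp)).sub (h0.const_mul C)
  intro x hx
  have := constant_of_has_deriv_right_zero (a := 0) (b := L)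
    (f := fun x : ℝ => f x * Complex.exp (-(r * x)) - C * x)
    (fun x _ => (hd x).continuousAt.continuousWithinAt) (by
      intro x hx
      have e := h x ⟨hx.1, hx.2.le⟩
      have e2 : Complex.exp (r * x) * Complex.exp (-(r * x)) = 1 := by
        rw [← Complex.exp_add]; simp
      have := (hd x).hasDerivWithinAt (s := Ici x)
      convert this using 1
      rw [e]
      linear_combination (-C) * e2) x hx
  simpa using this

lemma aux_E (L : ℝ) (lam r : ℂ) (v v1 v2 v3 : ℝ → ℂ) (h0 : ∀ x, HasDerivAt v (v1 x) x)
    (h1 : ∀ x, HasDerivAt v1 (v2 x) x) (h2 : ∀ x, HasDerivAt v2 (v3 x) x)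
    (h : ∀ x ∈ Icc (0 : ℝ) L, v3 x = -v1 x - lam * v x) (hr : r ^ 3 + r + lam = 0) :
    ∀ x ∈ Icc (0 : ℝ) L, (v2 x + r * v1 x + (r ^ 2 + 1) * v x) * Complex.exp (-(r * x))
      = v2 0 + r * v1 0 + (r ^ 2 + 1) * v 0 := by
  intro x hx
  have := aux_exp L (fun x => v2 x + r * v1 x + (r ^ 2 + 1) * v x)
    (fun x => v3 x + r * v2 x + (r ^ 2 + 1) * v1 x) r 0
    (fun x => ((h2 x).add ((h1 x).const_mul r)).add ((h0 x).const_mul _))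
    (fun x hx => by
      simp only [h x hx]
      linear_combination (-v x) * hr) x hx
  simpa using this

lemma aux_D (L : ℝ) (lam r : ℂ) (v v1 v2 v3 : ℝ → ℂ) (h0 : ∀ x, HasDerivAt v (v1 x) x)
    (h1 : ∀ x, HasDerivAt v1 (v2 x) x) (h2 : ∀ x, HasDerivAt v2 (v3 x) x)
    (h : ∀ x ∈ Icc (0 : ℝ) L, v3 x = -v1 x - lam * v x) (hr : r ^ 3 + r + lam = 0)
    (hr2 : 3 * r ^ 2 + 1 = 0) :
    ∀ x ∈ Icc (0 : ℝ) L, (v1 x + 2 * r * v x) * Complex.exp (-(r * x))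
      - (v2 0 + r * v1 0 + (r ^ 2 + 1) * v 0) * x = v1 0 + 2 * r * v 0 := by
  intro x hx
  exact aux_exp L (fun x => v1 x + 2 * r * v x)
    (fun x => v2 x + 2 * r * v1 x) r _
    (fun x => (h1 x).add ((h0 x).const_mul _))
    (fun x hx => by
      have e := aux_E L lam r v v1 v2 v3 h0 h1 h2 h hr x hx
      have e2 : Complex.exp (-(r * x)) * Complex.exp (r * x) = 1 := by
        rw [← Complex.exp_add]; simp
      rw [← e]
      linear_combination (-(v2 x + r * v1 x + (r ^ 2 + 1) * v x)) * e2 - v x * hr2) x hx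

lemma aux_zero (L : ℝ) (hL : 0 < L) (f f' : ℝ → ℂ) (r : ℂ) (hf : ∀ x, HasDerivAt f (f' x) x)
    (h : ∀ x ∈ Icc (0 : ℝ) L, f' x = r * f x) (hfL : f L = 0) :
    ∀ x ∈ Icc (0 : ℝ) L, f x = 0 := by
  have k := aux_exp L f f' r 0 hf (by simpa using h)
  have kL := k L ⟨hL.le, le_rfl⟩
  intro x hx
  have kx := k x hx
  rw [← kL, hfL] at kx
  simpa using kx

lemma aux_roots (lam : ℂ) : ∃ r s : ℂ, r ^ 3 + r + lam = 0 ∧ s ^ 2 + r * s + r ^ 2 + 1 = 0 := by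
  open Polynomial in
  obtain ⟨r, hr⟩ := IsAlgClosed.exists_root (k := ℂ) (X ^ 3 + X + C lam) (by
    have : (X ^ 3 + X + C lam : ℂ[X]).degree = 3 := by compute_degree!
    rw [this]; norm_num)
  open Polynomial in
  obtain ⟨s, hs⟩ := IsAlgClosed.exists_root (k := ℂ) (X ^ 2 + C r * X + C (r ^ 2 + 1)) (by
    have : (X ^ 2 + C r * X + C (r ^ 2 + 1) : ℂ[X]).degree = 2 := by compute_degree!
    rw [this]; norm_num)
  refine ⟨r, s, by simpa using hr, ?_⟩
  have : s ^ 2 + r * s + (r ^ 2 + 1) = 0 := by simpa using hs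
  linear_combination this

lemma aux_vanish (L : ℝ) (hL : 0 < L) (lam : ℂ) (v v1 v2 v3 : ℝ → ℂ)
    (h0 : ∀ x, HasDerivAt v (v1 x) x)
    (h1 : ∀ x, HasDerivAt v1 (v2 x) x) (h2 : ∀ x, HasDerivAt v2 (v3 x) x)
    (h : ∀ x ∈ Icc (0 : ℝ) L, v3 x = -v1 x - lam * v x)
    (b0 : v L = 0) (b1 : v1 L = 0) (b2 : v2 L = 0) : ∀ x ∈ Icc (0 : ℝ) L, v x = 0 := by
  obtain ⟨r, s, hr, hs⟩ := aux_roots lam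
  have e1 := aux_zero L hL (fun x => v2 x + r * v1 x + (r ^ 2 + 1) * v x)
    (fun x => v3 x + r * v2 x + (r ^ 2 + 1) * v1 x) r
    (fun x => ((h2 x).add ((h1 x).const_mul r)).add ((h0 x).const_mul _))
    (fun x hx => by
      simp only [h x hx]
      linear_combination (-v x) * hr) (by simp [b0, b1, b2])
  have e2 := aux_zero L hL (fun x => v1 x + (r + s) * v x)
    (fun x => v2 x + (r + s) * v1 x) s
    (fun x => (h1 x).add ((h0 x).const_mul _))
    (fun x hx => by
      have := e1 x hx
      linear_combination this - v x * hs) (by simp [b0, b1])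
  exact aux_zero L hL v v1 (-(r + s)) h0
    (fun x hx => by
      have := e2 x hx
      linear_combination this) b0

lemma aux_mono (L : ℝ) (hL : 0 < L) (Q q : ℝ → ℝ) (hQ : ∀ x ∈ Icc (0 : ℝ) L, HasDerivAt Q (q x) x)
    (hq : ∀ x, 0 ≤ q x) (he : Q 0 = Q L) : ∀ x ∈ Ioo (0 : ℝ) L, q x = 0 := by
  have hm : MonotoneOn Q (Icc 0 L) := by
    apply monotoneOn_of_deriv_nonneg (convex_Icc 0 L)
    · exact fun x hx => (hQ x hx).continuousAt.continuousWithinAt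
    · intro x hx
      exact (hQ x (interior_subset hx)).differentiableAt.differentiableWithinAt
    · intro x hx
      rw [(hQ x (interior_subset hx)).deriv]; exact hq x
  intro x hx
  have hc : Q =ᶠ[nhds x] fun _ => Q 0 := by
    filter_upwards [Ioo_mem_nhds hx.1 hx.2] with y hy
    apply le_antisymm
    · rw [he]; exact hm ⟨hy.1.le, hy.2.le⟩ ⟨hL.le, le_rfl⟩ hy.2.le
    · exact hm ⟨le_rfl, hL.le⟩ ⟨hy.1.le, hy.2.le⟩ hy.1.le
  have := (hQ x ⟨hx.1.le, hx.2.le⟩).deriv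
  rw [← this, hc.deriv_eq]; simp

/-- energy of a triple -/
noncomputable def aux_F (v v1 v2 : ℝ → ℂ) (x : ℝ) : ℝ :=
  2 * ((v2 x).re * (v x).re + (v2 x).im * (v x).im) - ((v1 x).re * (v1 x).re + (v1 x).im * (v1 x).im)
    + ((v x).re * (v x).re + (v x).im * (v x).im)

lemma aux_energy (L : ℝ) (lam : ℂ) (v v1 v2 v3 : ℝ → ℂ)
    (h0 : ∀ x, HasDerivAt v (v1 x) x)
    (h1 : ∀ x, HasDerivAt v1 (v2 x) x) (h2 : ∀ x, HasDerivAt v2 (v3 x) x)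
    (h : ∀ x ∈ Icc (0 : ℝ) L, v3 x = -v1 x - lam * v x) :
    ∀ x ∈ Icc (0 : ℝ) L, HasDerivAt (aux_F v v1 v2) (-2 * lam.re * Complex.normSq (v x)) x := by
  intro x hx
  have hre : ∀ (f : ℝ → ℂ) (f' : ℂ), HasDerivAt f f' x → HasDerivAt (fun y => (f y).re) f'.re x :=
    fun f f' hf => Complex.reCLM.hasFDerivAt.comp_hasDerivAt x hf
  have him : ∀ (f : ℝ → ℂ) (f' : ℂ), HasDerivAt f f' x → HasDerivAt (fun y => (f y).im) f'.im x :=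
    fun f f' hf => Complex.imCLM.hasFDerivAt.comp_hasDerivAt x hf
  have r0 := hre _ _ (h0 x)
  have r1 := hre _ _ (h1 x)
  have r2 := hre _ _ (h2 x)
  have i0 := him _ _ (h0 x)
  have i1 := him _ _ (h1 x)
  have i2 := him _ _ (h2 x)
  have := ((((r2.mul r0).add (i2.mul i0)).const_mul 2).sub ((r1.mul r1).add (i1.mul i1))).add
    ((r0.mul r0).add (i0.mul i0))
  refine HasDerivAt.congr_deriv (f := aux_F v v1 v2) this ?_
  rw [h x hx]
  simp [Complex.normSq_apply]
  ring

lemma aux_real (L : ℝ) (k1 k2 k3 : ℝ) (P S S' : ℂ) (h12 : k1 ≠ k2) (h13 : k1 ≠ k3) (h23 : k2 ≠ k3)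
    (hsum : k1 + k2 + k3 = 0)
    (hv : ∀ k : ℝ, k = k1 ∨ k = k2 ∨ k = k3 →
      (k : ℂ) * Complex.exp (-(Complex.I * k * L)) = S + k * P)
    (hw : ∀ k : ℝ, k = k1 ∨ k = k2 ∨ k = k3 →
      (k : ℂ) * Complex.exp (Complex.I * k * L) = S' - k * P) : False := by
  have hconj : ∀ k : ℝ, (starRingEnd ℂ) (Complex.exp (-(Complex.I * k * L)))
      = Complex.exp (Complex.I * k * L) := by
    intro k; rw [← Complex.exp_conj]; simp
  have hP : (starRingEnd ℂ) P = -P := by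
    have key : ∀ k : ℝ, k = k1 ∨ k = k2 ∨ k = k3 →
        (starRingEnd ℂ) S + k * (starRingEnd ℂ) P = S' - k * P := by
      intro k hk
      have := congrArg (starRingEnd ℂ) (hv k hk)
      rw [map_mul, hconj, Complex.conj_ofReal, hw k hk] at this
      simpa using this.symm
    have a1 := key k1 (by simp)
    have a2 := key k2 (by simp)
    have hne : (k1 : ℂ) - k2 ≠ 0 := by
      rw [← Complex.ofReal_sub]; exact_mod_cast sub_ne_zero.mpr h12
    apply mul_left_cancel₀ hne
    linear_combination a1 - a2
  have hq : ∀ k : ℝ, k = k1 ∨ k = k2 ∨ k = k3 →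
      Complex.normSq S + 2 * k * (S.re * P.re + S.im * P.im) + k ^ 2 * (Complex.normSq P - 1) = 0 := by
    intro k hk
    have := congrArg Complex.normSq (hv k hk)
    have e : Complex.normSq (Complex.exp (-(Complex.I * k * L))) = 1 := by
      rw [Complex.normSq_eq_norm_sq, Complex.norm_exp]; simp
    rw [Complex.normSq_mul, e] at this
    simp [Complex.normSq_apply] at this ⊢
    linarith
  have q1 := hq k1 (by simp)
  have q2 := hq k2 (by simp)
  have q3 := hq k3 (by simp)
  set A := Complex.normSq S with hA
  set B := S.re * P.re + S.im * P.im
  set C := Complex.normSq P - 1 with hC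
  have d12 : 2 * B + (k1 + k2) * C = 0 := by
    apply mul_left_cancel₀ (sub_ne_zero.mpr h12); linear_combination q1 - q2
  have d13 : 2 * B + (k1 + k3) * C = 0 := by
    apply mul_left_cancel₀ (sub_ne_zero.mpr h13); linear_combination q1 - q3
  have hC0 : C = 0 := by
    apply mul_left_cancel₀ (sub_ne_zero.mpr h23); linear_combination d12 - d13
  have hB0 : B = 0 := by rw [hC0] at d12; linarith
  have hS : S = 0 := by
    rw [hC0, hB0] at q1
    rw [← Complex.normSq_eq_zero, ← hA]; linarith
  have hP2 : P * P = -1 := by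
    have := Complex.mul_conj P
    rw [hP, show Complex.normSq P = 1 by linarith] at this
    push_cast at this
    linear_combination -this
  have hE : ∀ k : ℝ, k = k1 ∨ k = k2 ∨ k = k3 → k ≠ 0 → Complex.exp (-(Complex.I * k * L)) = P := by
    intro k hk hk0
    have := hv k hk
    rw [hS, zero_add] at this
    exact mul_left_cancel₀ (by exact_mod_cast hk0) this
  have pair : ∀ a b : ℝ, a = k1 ∨ a = k2 ∨ a = k3 → b = k1 ∨ b = k2 ∨ b = k3 → a + b = 0 →
      a ≠ 0 → False := by
    intro a b ha hb hab ha0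
    have hb' : b = -a := by linarith
    have e1 := hE a ha ha0
    have e2 := hE b hb (by rw [hb']; simpa using ha0)
    have : Complex.exp (-(Complex.I * a * L)) * Complex.exp (-(Complex.I * b * L)) = 1 := by
      rw [← Complex.exp_add, hb']; push_cast
      rw [show -(Complex.I * a * L) + -(Complex.I * -a * L) = 0 by ring, Complex.exp_zero]
    rw [e1, e2, hP2] at this
    norm_num at this
  by_cases z1 : k1 = 0
  · exact pair k2 k3 (by simp) (by simp) (by linarith) (by rw [← z1]; exact h12.symm)
  by_cases z2 : k2 = 0
  · exact pair k1 k3 (by simp) (by simp) (by linarith) z1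
  by_cases z3 : k3 = 0
  · exact pair k1 k2 (by simp) (by simp) (by linarith) z1
  have e1 := hE k1 (by simp) z1
  have e2 := hE k2 (by simp) z2
  have e3 := hE k3 (by simp) z3
  have : Complex.exp (-(Complex.I * k1 * L)) * Complex.exp (-(Complex.I * k2 * L))
      * Complex.exp (-(Complex.I * k3 * L)) = 1 := by
    rw [← Complex.exp_add, ← Complex.exp_add, show k3 = -k1 - k2 by linarith]; push_cast
    rw [show -(Complex.I * k1 * L) + -(Complex.I * k2 * L)
      + -(Complex.I * (-(k1 : ℂ) - k2) * L) = 0 by ring, Complex.exp_zero]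
  rw [e1, e2, e3, hP2] at this
  have h2 : P * P = 1 := by linear_combination (-P + 1) * this
  rw [hP2] at h2
  norm_num at h2

lemma aux_double (L : ℝ) (hL : 0 < L) (h : ℝ) (hh : 3 * h ^ 2 = 1) (P S : ℂ)
    (e1 : (h : ℂ) * Complex.exp (-(Complex.I * h * L)) = S + h * P)
    (e2 : (-2 * h : ℂ) * Complex.exp (-(Complex.I * (-2 * h) * L)) = S + (-2 * h) * P)
    (e3 : Complex.exp (-(Complex.I * h * L)) - Complex.I * (S + h * P) * L = P) : False := by
  have h0 : h ≠ 0 := by rintro rfl; norm_num at hh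
  set Z := Complex.exp (-(Complex.I * h * L)) with hZ
  have hZ0 : Z ≠ 0 := Complex.exp_ne_zero _
  have e : Complex.exp (-(Complex.I * (-2 * h) * L)) = Z * Complex.exp ((3 * h * L : ℝ) * Complex.I) := by
    rw [hZ, ← Complex.exp_add]; congr 1; push_cast; ring
  set W := Complex.exp ((3 * h * L : ℝ) * Complex.I) with hW
  rw [e] at e2
  have hP : P = Z * (1 - Complex.I * h * L) := by
    rw [← e3, ← e1]; ring
  have hc : (h : ℂ) ≠ 0 := by exact_mod_cast h0
  have key : 2 * W = 2 - 3 * Complex.I * h * L := by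
    apply mul_left_cancel₀ (mul_ne_zero hc hZ0)
    linear_combination e1 - e2 + 3 * h * hP
  have n1 : Complex.normSq W = 1 := by
    rw [hW, Complex.normSq_eq_norm_sq, Complex.norm_exp_ofReal_mul_I]; norm_num
  have r := congrArg Complex.normSq key
  rw [Complex.normSq_mul, n1] at r
  simp [Complex.normSq_apply] at r
  have : 0 < (h * L) ^ 2 := by positivity
  rcases r with r | r
  · exact h0 r
  · exact hL.ne' r

lemma aux_complex (L : ℝ) (hL : 0 < L) (h b : ℝ) (h0 : h ≠ 0) (hb : 0 < b) (P S : ℂ)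
    (e1 : (h + b * Complex.I) * Complex.exp (-(Complex.I * (h + b * Complex.I) * L))
      = S + (h + b * Complex.I) * P)
    (e2 : (h - b * Complex.I) * Complex.exp (-(Complex.I * (h - b * Complex.I) * L))
      = S + (h - b * Complex.I) * P)
    (e3 : (-2 * h : ℂ) * Complex.exp (-(Complex.I * (-2 * h) * L)) = S + (-2 * h) * P) : False := by
  set Z := Complex.exp (-(Complex.I * h * L)) with hZ
  have hZ0 : Z ≠ 0 := Complex.exp_ne_zero _
  have z1 : Complex.exp (-(Complex.I * (h + b * Complex.I) * L)) = Z * (Real.exp (b * L) : ℝ) := by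
    rw [hZ, Complex.ofReal_exp, ← Complex.exp_add]; congr 1; push_cast
    linear_combination (-b * L : ℂ) * Complex.I_sq
  have z2 : Complex.exp (-(Complex.I * (h - b * Complex.I) * L)) = Z * (Real.exp (-(b * L)) : ℝ) := by
    rw [hZ, Complex.ofReal_exp, ← Complex.exp_add]; congr 1; push_cast
    linear_combination (b * L : ℂ) * Complex.I_sq
  have z3 : Complex.exp (-(Complex.I * (-2 * h) * L)) = Z * Complex.exp ((3 * h * L : ℝ) * Complex.I) := by
    rw [hZ, ← Complex.exp_add]; congr 1; push_cast; ring
  rw [z1] at e1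
  rw [z2] at e2
  rw [z3] at e3
  set W := Complex.exp ((3 * h * L : ℝ) * Complex.I) with hW
  set X := Real.exp (b * L) with hX
  set Y := Real.exp (-(b * L)) with hY
  have key : (h + b * Complex.I) * (-3 * h + b * Complex.I) * X
      + (h - b * Complex.I) * (3 * h + b * Complex.I) * Y + (-2 * h) * (-2 * b * Complex.I) * W = 0 := by
    apply mul_left_cancel₀ hZ0
    linear_combination (-3 * h + b * Complex.I) * e1 + (3 * h + b * Complex.I) * e2
      + (-2 * b * Complex.I) * e3
  have hi := congrArg Complex.im key
  have hWre : W.re = Real.cos (3 * h * L) := by rw [hW, Complex.exp_ofReal_mul_I_re]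
  simp at hi
  rw [hWre] at hi
  have hXY : X + Y = 2 * Real.cos (3 * h * L) := by
    apply mul_left_cancel₀ (mul_ne_zero h0 hb.ne')
    linarith
  have hprod : X * Y = 1 := by rw [hX, hY, ← Real.exp_add]; simp
  have hX1 : 1 < X := by rw [hX]; exact Real.one_lt_exp_iff.mpr (by positivity)
  have := Real.cos_le_one (3 * h * L)
  have hY0 : 0 < Y := Real.exp_pos _
  nlinarith [mul_pos (sub_pos.mpr hX1) hY0]

lemma aux_realroot (m : ℝ) : ∃ c : ℝ, c ^ 3 - c + m = 0 := by
  have hc : Continuous fun c : ℝ => c ^ 3 - c + m := by fun_prop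
  have h := intermediate_value_Icc (a := -(|m| + 2)) (b := |m| + 2)
    (by have := abs_nonneg m; linarith) hc.continuousOn
  have h1 := neg_abs_le m
  have h2 := le_abs_self m
  have h3 := abs_nonneg m
  obtain ⟨c, _, hc⟩ := h (show (0 : ℝ) ∈ _ by
    constructor
    · skip
      nlinarith [mul_nonneg h3 h3, mul_nonneg (mul_nonneg h3 h3) h3]
    · skip
      nlinarith [mul_nonneg h3 h3, mul_nonneg (mul_nonneg h3 h3) h3])
  exact ⟨c, hc⟩

lemma aux_final (L : ℝ) (hL : 0 < L) (m : ℝ) (P S S' : ℂ)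
    (hv : ∀ k : ℂ, k ^ 3 - k + m = 0 → k * Complex.exp (-(Complex.I * k * L)) = S + k * P)
    (hw : ∀ k : ℂ, k ^ 3 - k + m = 0 → k * Complex.exp (Complex.I * k * L) = S' - k * P)
    (hd : ∀ k : ℂ, k ^ 3 - k + m = 0 → 3 * k ^ 2 = 1 →
      Complex.exp (-(Complex.I * k * L)) - Complex.I * (S + k * P) * L = P) : False := by
  -- a double root is impossible
  have dbl : ∀ h : ℝ, h ^ 3 - h + m = 0 → 3 * h ^ 2 = 1 → False := by
    intro h h1 h2
    have h1c : (h : ℂ) ^ 3 - h + m = 0 := by exact_mod_cast h1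
    have h2c : 3 * (h : ℂ) ^ 2 = 1 := by exact_mod_cast h2
    exact aux_double L hL h h2 P S (hv _ h1c)
      (hv (-2 * h) (by linear_combination h1c - 3 * h * h2c)) (hd _ h1c h2c)
  obtain ⟨c, hc⟩ := aux_realroot m
  obtain ⟨h, rfl⟩ : ∃ h : ℝ, c = -2 * h := ⟨-c / 2, by ring⟩
  have hcc : (-2 * h : ℂ) ^ 3 - (-2 * h) + m = 0 := by exact_mod_cast hc
  rcases lt_trichotomy (1 - 3 * h ^ 2) 0 with hlt | heq | hgt
  · set b := Real.sqrt (3 * h ^ 2 - 1) with hb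
    have hb2 : b ^ 2 = 3 * h ^ 2 - 1 := Real.sq_sqrt (by linarith)
    have hbpos : 0 < b := Real.sqrt_pos.mpr (by linarith)
    have hb2c : (b : ℂ) ^ 2 = 3 * h ^ 2 - 1 := by exact_mod_cast hb2
    have h0 : h ≠ 0 := by rintro rfl; norm_num at hlt
    have hI := Complex.I_sq
    have i3 : Complex.I ^ 3 = -Complex.I := by rw [pow_succ, hI]; ring
    refine aux_complex L hL h b h0 hbpos P S (hv _ ?_) (hv _ ?_) (hv _ hcc)
    · linear_combination hcc + (3 * h * b ^ 2) * hI + b ^ 3 * i3 - (3 * h + b * Complex.I) * hb2c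
    · linear_combination hcc + (3 * h * b ^ 2) * hI - b ^ 3 * i3 - (3 * h - b * Complex.I) * hb2c
  · exact dbl h (by linear_combination hc - 3 * h * heq) (by linarith)
  · set d := Real.sqrt (1 - 3 * h ^ 2) with hd'
    have hd2 : d ^ 2 = 1 - 3 * h ^ 2 := Real.sq_sqrt (by linarith)
    have hdpos : 0 < d := Real.sqrt_pos.mpr (by linarith)
    have r1 : (h + d) ^ 3 - (h + d) + m = 0 := by linear_combination hc + (3 * h + d) * hd2
    have r2 : (h - d) ^ 3 - (h - d) + m = 0 := by linear_combination hc + (3 * h - d) * hd2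
    have hall : ∀ k : ℝ, k = h + d ∨ k = h - d ∨ k = -2 * h → (k : ℂ) ^ 3 - k + m = 0 := by
      rintro k (rfl | rfl | rfl)
      · exact_mod_cast r1
      · exact_mod_cast r2
      · exact_mod_cast hc
    refine aux_real L (h + d) (h - d) (-2 * h) P S S' (by intro e; linarith) ?_ ?_ (by ring)
      (fun k hk => hv k (hall k hk)) (fun k hk => hw k (hall k hk))
    · intro e
      have : d = -3 * h := by linarith
      exact dbl (-2 * h) hc (by rw [this] at hd2; linarith)
    · intro e
      have : d = 3 * h := by linarith
      exact dbl (-2 * h) hc (by rw [this] at hd2; linarith)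

lemma aux_main (L : ℝ) (hL : 0 < L) (lam : ℂ) (v v1 v2 v3 w w1 w2 w3 : ℝ → ℂ)
    (hv0 : ∀ x, HasDerivAt v (v1 x) x) (hv1 : ∀ x, HasDerivAt v1 (v2 x) x)
    (hv2 : ∀ x, HasDerivAt v2 (v3 x) x)
    (hw0 : ∀ x, HasDerivAt w (w1 x) x) (hw1 : ∀ x, HasDerivAt w1 (w2 x) x)
    (hw2 : ∀ x, HasDerivAt w2 (w3 x) x)
    (hv : ∀ x ∈ Icc (0 : ℝ) L, v3 x = -v1 x - lam * v x)
    (hw : ∀ x ∈ Icc (0 : ℝ) L, w3 x = -w1 x - (-lam) * w x)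
    (bv0 : v 0 = 0) (bvL : v L = 0) (bw0 : w 0 = 0) (bwL : w L = 0)
    (bv2 : v2 L = 0) (bw2 : w2 L = 0) (b0 : w1 0 = -v1 0) (bL : w1 L = v1 L) :
    ∀ x ∈ Icc (0 : ℝ) L, v x = 0 ∧ w x = 0 := by
  have mL : L ∈ Icc (0 : ℝ) L := ⟨hL.le, le_rfl⟩
  by_cases ha : v1 L = 0
  · intro x hx
    exact ⟨aux_vanish L hL lam v v1 v2 v3 hv0 hv1 hv2 hv bvL ha bv2 x hx,
      aux_vanish L hL (-lam) w w1 w2 w3 hw0 hw1 hw2 hw bwL (by rw [bL, ha]) bw2 x hx⟩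
  by_cases hre : lam.re = 0
  · exfalso
    set a := v1 L with hadef
    obtain ⟨m, rfl⟩ : ∃ m : ℝ, lam = -(Complex.I * m) := ⟨-lam.im, by
      apply Complex.ext <;> simp [hre]⟩
    have hI := Complex.I_sq
    have i3 : Complex.I ^ 3 = -Complex.I := by rw [pow_succ, hI]; ring
    have hI0 := Complex.I_ne_zero
    refine aux_final L hL m (v1 0 / a) (v2 0 / (Complex.I * a)) (-(w2 0) / (Complex.I * a)) ?_ ?_ ?_
    · intro k hk
      have := aux_E L _ (Complex.I * k) v v1 v2 v3 hv0 hv1 hv2 hv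
        (by linear_combination k ^ 3 * i3 - Complex.I * hk) L mL
      rw [bv0, bvL, bv2] at this
      generalize Complex.exp (-(Complex.I * k * L)) = Z at this ⊢
      field_simp
      linear_combination this
    · intro k hk
      have := aux_E L _ (-(Complex.I * k)) w w1 w2 w3 hw0 hw1 hw2 hw
        (by linear_combination -k ^ 3 * i3 + Complex.I * hk) L mL
      rw [bw0, bwL, bw2, b0, bL] at this
      rw [show -(-(Complex.I * k) * (L : ℂ)) = Complex.I * k * L by ring] at this
      generalize Complex.exp (Complex.I * k * L) = Z at this ⊢
      field_simp
      linear_combination -this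
    · intro k hk hk2
      have := aux_D L _ (Complex.I * k) v v1 v2 v3 hv0 hv1 hv2 hv
        (by linear_combination k ^ 3 * i3 - Complex.I * hk)
        (by linear_combination 3 * k ^ 2 * hI - hk2) L mL
      rw [bv0, bvL] at this
      generalize Complex.exp (-(Complex.I * k * L)) = Z at this ⊢
      field_simp
      linear_combination this
  · have Q := aux_mono L hL (fun x => (aux_F v v1 v2 x - aux_F w w1 w2 x) / (-2 * lam.re))
      (fun x => Complex.normSq (v x) + Complex.normSq (w x))
      (fun x hx => by
        have := ((aux_energy L lam v v1 v2 v3 hv0 hv1 hv2 hv x hx).sub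
          (aux_energy L (-lam) w w1 w2 w3 hw0 hw1 hw2 hw x hx)).div_const (-2 * lam.re)
        refine HasDerivAt.congr_deriv this ?_
        simp only [Complex.neg_re]
        field_simp
        ring)
      (fun x => add_nonneg (Complex.normSq_nonneg _) (Complex.normSq_nonneg _))
      (by simp [aux_F, bv0, bvL, bw0, bwL, b0, bL])
    intro x hx
    rcases eq_or_lt_of_le hx.1 with rfl | h1
    · exact ⟨bv0, bw0⟩
    rcases eq_or_lt_of_le hx.2 with rfl | h2
    · exact ⟨bvL, bwL⟩
    have := Q x ⟨h1, h2⟩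
    have n1 := Complex.normSq_nonneg (v x)
    have n2 := Complex.normSq_nonneg (w x)
    exact ⟨Complex.normSq_eq_zero.mp (by linarith), Complex.normSq_eq_zero.mp (by linarith)⟩

lemma aux_reg (f : ℝ → ℂ) (hf : ContDiff ℝ 3 f) :
    (∀ x, HasDerivAt f (deriv f x) x) ∧ (∀ x, HasDerivAt (deriv f) (deriv (deriv f) x) x) ∧
    (∀ x, HasDerivAt (deriv (deriv f)) (deriv (deriv (deriv f)) x) x) := by
  have h3 : ContDiff ℝ (2 + 1) f := hf
  have h2 : ContDiff ℝ (1 + 1) (deriv f) := (contDiff_succ_iff_deriv.mp h3).2.2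
  have h1 : ContDiff ℝ 1 (deriv (deriv f)) := (contDiff_succ_iff_deriv.mp h2).2.2
  exact ⟨fun x => (h3.differentiable (by norm_num) x).hasDerivAt,
    fun x => (h2.differentiable (by norm_num) x).hasDerivAt,
    fun x => (h1.differentiable (by norm_num) x).hasDerivAt⟩

/-- For any `L > 0`, the spectral problem for the linearized Boussinesq system with boundary
conditions `θ(0) = θ(L) = θ′(0) = θ″(L) = 0`, `u(0) = u(L) = u′(L) = u″(L) = 0` has only the
trivial solution. -/
theorem statement_5 (L : ℝ) (hL : 0 < L)
    (lam : ℂ) (θ u : ℝ → ℂ)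
    (hθreg : ContDiff ℝ 3 θ) (hureg : ContDiff ℝ 3 u)
    (heq1 : ∀ x ∈ Icc (0 : ℝ) L, -deriv u x - deriv (deriv (deriv u)) x = lam * θ x)
    (heq2 : ∀ x ∈ Icc (0 : ℝ) L, -deriv θ x - deriv (deriv (deriv θ)) x = lam * u x)
    (hθ0 : θ 0 = 0) (hθL : θ L = 0) (hθ'0 : deriv θ 0 = 0) (hθ''L : deriv (deriv θ) L = 0)
    (hu0 : u 0 = 0) (huL : u L = 0) (hu'L : deriv u L = 0) (hu''L : deriv (deriv u) L = 0) :
    ∀ x ∈ Icc (0 : ℝ) L, θ x = 0 ∧ u x = 0 := by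
  obtain ⟨t0, t1, t2⟩ := aux_reg θ hθreg
  obtain ⟨u0, u1, u2⟩ := aux_reg u hureg
  have := aux_main L hL lam _ _ _ _ _ _ _ _
    (fun x => (t0 x).add (u0 x)) (fun x => (t1 x).add (u1 x)) (fun x => (t2 x).add (u2 x))
    (fun x => (t0 x).sub (u0 x)) (fun x => (t1 x).sub (u1 x)) (fun x => (t2 x).sub (u2 x))
    (fun x hx => by
      simp only [Pi.add_apply]
      linear_combination -heq1 x hx - heq2 x hx)
    (fun x hx => by
      simp only [Pi.sub_apply]
      linear_combination heq1 x hx - heq2 x hx)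
    (by simp [hθ0, hu0]) (by simp [hθL, huL]) (by simp [hθ0, hu0]) (by simp [hθL, huL])
    (by simp [hθ''L, hu''L]) (by simp [hθ''L, hu''L]) (by simp [hθ'0]) (by simp [hu'L])
  intro x hx
  obtain ⟨p, q⟩ := this x hx
  simp only [Pi.add_apply, Pi.sub_apply] at p q
  exact ⟨by linear_combination (p + q) / 2, by linear_combination (p - q) / 2⟩
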